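/- Let A be a finite alphabet, F the free group on A, R a subset of F, S a finite subset of R, and U a finite subset of F. Set R' = (R \ S) ∪ U and assume that the normal closure of R' in F equals the normal closure of R in F (so R' is obtained from R by a T-transformation). Then there exists a constant M ≥ 0 such that for every W in the normal closure of R: if W can be written as a product of L conjugates of elements of R ∪ R⁻¹, then W can be written as a product of at most (1+M)·L conjugates of elements of R' ∪ R'⁻¹. In particular, Area_{R'}(W) ≤ (1+M)·Area_R(W) for all such W. -/

import Mathlib

/-- `W` is a product of `L` conjugates of elements of `R ∪ R⁻¹`. -/
def IsProdConjPM {G : Type*} [Group G] (R : Set G) (L : ℕ) (W : G) : Prop :=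
  ∃ f : Fin L → G,
    (∀ j, ∃ x r, r ∈ R ∧ (f j = x * r * x⁻¹ ∨ f j = x * r⁻¹ * x⁻¹)) ∧
    W = (List.ofFn f).prod

/-- `Area R W` : the minimal number `L` such that `W` is a product of `L`
conjugates of elements of `R ∪ R⁻¹`. -/
noncomputable def Area {G : Type*} [Group G] (R : Set G) (W : G) : ℕ :=
  sInf {L : ℕ | IsProdConjPM R L W}

/-!
Conjugating or inverting a product of `n` conjugates of elements of `R' ∪ R'⁻¹` gives another
such product of the same length. Hence, if every element of `R` is a product of at most `K`
conjugates of elements of `R' ∪ R'⁻¹`, then substituting these expressions factor by factor turns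
a product of `L` conjugates over `R` into one of at most `K * L` conjugates over `R'`. Such a `K`
exists because elements of `R ∩ R'` have length one over `R'`, and only finitely many elements of
`R` are left.
-/

section

open scoped Pointwise

open Group (conjugatesOfSet)

variable {G : Type*} [Group G] {R R' : Set G} {K L m n : ℕ} {V W r : G}

theorem mem_conjugatesOfSet_union_inv_iff {g : G} :
    g ∈ conjugatesOfSet (R ∪ R⁻¹) ↔
      ∃ x r, r ∈ R ∧ (g = x * r * x⁻¹ ∨ g = x * r⁻¹ * x⁻¹) := by
  simp only [Group.mem_conjugatesOfSet_iff, isConj_iff]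
  constructor
  · rintro ⟨r, hr | hr, x, rfl⟩
    · exact ⟨x, r, hr, .inl rfl⟩
    · exact ⟨x, r⁻¹, hr, .inr (by rw [inv_inv])⟩
  · rintro ⟨x, r, hr, rfl | rfl⟩
    · exact ⟨r, .inl hr, x, rfl⟩
    · exact ⟨r⁻¹, .inr (Set.inv_mem_inv.mpr hr), x, rfl⟩

theorem inv_conjugatesOfSet (s : Set G) : (conjugatesOfSet s)⁻¹ = conjugatesOfSet s⁻¹ := by
  ext g
  simp only [Set.mem_inv, Group.mem_conjugatesOfSet_iff, isConj_iff]
  constructor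
  · rintro ⟨a, ha, x, hx⟩
    exact ⟨a⁻¹, Set.inv_mem_inv.mpr ha, x, by rw [← conj_inv, hx, inv_inv]⟩
  · rintro ⟨a, ha, x, rfl⟩
    exact ⟨a⁻¹, ha, x, conj_inv.symm⟩

theorem isProdConjPM_iff_mem_pow :
    IsProdConjPM R n W ↔ W ∈ conjugatesOfSet (R ∪ R⁻¹) ^ n := by
  simp only [IsProdConjPM, ← mem_conjugatesOfSet_union_inv_iff, Set.mem_pow]
  constructor
  · rintro ⟨f, hf, rfl⟩
    exact ⟨fun j => ⟨f j, hf j⟩, rfl⟩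
  · rintro ⟨f, rfl⟩
    exact ⟨fun j => f j, fun j => (f j).2, rfl⟩

theorem isProdConjPM_zero_one : IsProdConjPM R 0 1 :=
  isProdConjPM_iff_mem_pow.mpr (by simp)

theorem isProdConjPM_one_of_mem (hr : r ∈ R) : IsProdConjPM R 1 r :=
  isProdConjPM_iff_mem_pow.mpr <| by
    simpa only [pow_one] using Group.subset_conjugatesOfSet (Set.mem_union_left R⁻¹ hr)

namespace IsProdConjPM

theorem mul (hV : IsProdConjPM R m V) (hW : IsProdConjPM R n W) :
    IsProdConjPM R (m + n) (V * W) := by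
  rw [isProdConjPM_iff_mem_pow] at *
  rw [pow_add]
  exact Set.mul_mem_mul hV hW

theorem inv (hW : IsProdConjPM R n W) : IsProdConjPM R n W⁻¹ := by
  rw [isProdConjPM_iff_mem_pow] at *
  have hsymm : (conjugatesOfSet (R ∪ R⁻¹))⁻¹ = conjugatesOfSet (R ∪ R⁻¹) := by
    rw [inv_conjugatesOfSet, Set.union_inv, inv_inv, Set.union_comm]
  rw [← hsymm, inv_pow]
  exact Set.inv_mem_inv.mpr hW

theorem conj (hW : IsProdConjPM R n W) (x : G) : IsProdConjPM R n (x * W * x⁻¹) := by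
  rw [isProdConjPM_iff_mem_pow] at *
  have himage : MulAut.conj x '' conjugatesOfSet (R ∪ R⁻¹) ⊆ conjugatesOfSet (R ∪ R⁻¹) :=
    Set.image_subset_iff.mpr fun _ hg => Group.conj_mem_conjugatesOfSet hg
  have hmem := Set.mem_image_of_mem (MulAut.conj x) hW
  rw [Set.image_pow] at hmem
  exact Set.pow_subset_pow_left himage hmem

theorem exists_le_mul_of_forall_mem
    (hR : ∀ r ∈ R, ∃ n ≤ K, IsProdConjPM R' n r) (hW : IsProdConjPM R L W) :
    ∃ L' ≤ K * L, IsProdConjPM R' L' W := by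
  rw [isProdConjPM_iff_mem_pow] at hW
  induction L generalizing W with
  | zero =>
    obtain rfl : W = 1 := by simpa using hW
    exact ⟨0, Nat.zero_le _, isProdConjPM_zero_one⟩
  | succ L ih =>
    rw [pow_succ] at hW
    obtain ⟨V, hV, g, hg, rfl⟩ := hW
    obtain ⟨m, hm, hVm⟩ := ih hV
    obtain ⟨x, r, hr, hgr⟩ := mem_conjugatesOfSet_union_inv_iff.mp hg
    obtain ⟨n, hn, hrn⟩ := hR r hr
    have hgn : IsProdConjPM R' n g := by
      obtain rfl | rfl := hgr
      exacts [hrn.conj x, hrn.inv.conj x]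
    exact ⟨m + n, add_le_add hm hn, hVm.mul hgn⟩

theorem area_le (hW : IsProdConjPM R n W) : Area R W ≤ n :=
  Nat.sInf_le hW

end IsProdConjPM

theorem exists_isProdConjPM_of_mem_normalClosure (hW : W ∈ Subgroup.normalClosure R) :
    ∃ n, IsProdConjPM R n W := by
  induction hW using Subgroup.closure_induction with
  | mem g hg =>
    obtain ⟨r, hr, hrg⟩ := Group.mem_conjugatesOfSet_iff.mp hg
    obtain ⟨x, rfl⟩ := isConj_iff.mp hrg
    exact ⟨1, (isProdConjPM_one_of_mem hr).conj x⟩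
  | one => exact ⟨0, isProdConjPM_zero_one⟩
  | mul V W _ _ hV hW =>
    obtain ⟨m, hm⟩ := hV
    obtain ⟨n, hn⟩ := hW
    exact ⟨m + n, hm.mul hn⟩
  | inv W _ hW =>
    obtain ⟨n, hn⟩ := hW
    exact ⟨n, hn.inv⟩

theorem isProdConjPM_area (hW : W ∈ Subgroup.normalClosure R) : IsProdConjPM R (Area R W) W :=
  Nat.sInf_mem (exists_isProdConjPM_of_mem_normalClosure hW)

theorem exists_forall_area_le_one_add (hfin : (R \ R').Finite) :
    ∃ M, ∀ r ∈ R, Area R' r ≤ 1 + M := by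
  obtain ⟨M, hM⟩ := (hfin.image (Area R')).bddAbove
  refine ⟨M, fun r hr => ?_⟩
  by_cases hr' : r ∈ R'
  · exact (isProdConjPM_one_of_mem hr').area_le.trans (Nat.le_add_right 1 M)
  · exact (hM (Set.mem_image_of_mem _ ⟨hr, hr'⟩)).trans (Nat.le_add_left M 1)

theorem area_le_of_T_transformation_general (hfin : (R \ R').Finite)
    (hR : R ⊆ Subgroup.normalClosure R') :
    ∃ M : ℕ,
      (∀ W L, IsProdConjPM R L W → ∃ L' ≤ (1 + M) * L, IsProdConjPM R' L' W) ∧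
      ∀ W ∈ Subgroup.normalClosure R, Area R' W ≤ (1 + M) * Area R W := by
  obtain ⟨M, hM⟩ := exists_forall_area_le_one_add hfin
  have hsubst : ∀ W L, IsProdConjPM R L W → ∃ L' ≤ (1 + M) * L, IsProdConjPM R' L' W :=
    fun _ _ => IsProdConjPM.exists_le_mul_of_forall_mem fun r hr =>
      ⟨Area R' r, hM r hr, isProdConjPM_area (hR hr)⟩
  refine ⟨M, hsubst, fun W hW => ?_⟩
  obtain ⟨L', hL', hWL'⟩ := hsubst W (Area R W) (isProdConjPM_area hW)
  exact hWL'.area_le.trans hL'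

end

/-- a T-transformation distorts areas by at most a multiplicative
constant `1 + M`. -/
theorem area_le_of_T_transformation {α : Type} [Fintype α]
    (R S U : Set (FreeGroup α)) (hS : S.Finite) (hSR : S ⊆ R) (hU : U.Finite)
    (hclosure : Subgroup.normalClosure ((R \ S) ∪ U) = Subgroup.normalClosure R) :
    ∃ M : ℕ, 0 ≤ M ∧
      (∀ W ∈ Subgroup.normalClosure R, ∀ L : ℕ,
        IsProdConjPM R L W →
          ∃ L' : ℕ, L' ≤ (1 + M) * L ∧ IsProdConjPM ((R \ S) ∪ U) L' W) ∧
      (∀ W ∈ Subgroup.normalClosure R,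
        Area ((R \ S) ∪ U) W ≤ (1 + M) * Area R W) := by
  obtain ⟨M, hprod, harea⟩ := area_le_of_T_transformation_general
    (hS.subset (by grind : R \ ((R \ S) ∪ U) ⊆ S))
    (Subgroup.subset_normalClosure.trans hclosure.ge)
  exact ⟨M, M.zero_le, fun W _ => hprod W, harea⟩
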